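/- For every standard disjunction δ there is a standard conjunction κ such that ¬δ ↔ κ holds at every pointed general concurrent game model, and conversely, for every standard conjunction κ there is a standard disjunction δ such that ¬κ ↔ δ holds at every pointed general concurrent game model. -/

import Mathlib

/-!
The side conditions on the coalition data of the two standard forms coincide, so negating
`γ ∨ (P → Q)` into `(¬γ ∧ P) ∧ ¬Q` only requires replacing the elementary part by its De Morgan
dual. Being the negation of each other up to equivalence is a symmetric relation, so the
converse direction is the same computation read backwards.
-/

namespace CL

/-- The language Φ of coalition logic over a set of agents, with atomic
propositions drawn from ℕ (a countable set). -/
inductive Formula (Agent : Type) : Type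
  | top : Formula Agent
  | atom : ℕ → Formula Agent
  | neg : Formula Agent → Formula Agent
  | and : Formula Agent → Formula Agent → Formula Agent
  | coal : Set Agent → Formula Agent → Formula Agent

namespace Formula

variable {Agent : Type}

def bot : Formula Agent := neg top

def or (φ ψ : Formula Agent) : Formula Agent := neg (and (neg φ) (neg ψ))

def imp (φ ψ : Formula Agent) : Formula Agent := or (neg φ) ψ

def iff (φ ψ : Formula Agent) : Formula Agent := and (imp φ ψ) (imp ψ φ)

end Formula

/-- The three frame properties: seriality, independence of agents, determinism.
`ES` is represented by `Set P3`, the eight subsets of {S, I, D}. -/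
inductive P3 : Type
  | S | I | D
deriving DecidableEq
section
open Classical

/-- Merge of two joint actions of disjoint coalitions. -/
noncomputable def jaUnion {Agent Act : Type} {C D : Set Agent}
    (σC : C → Act) (σD : D → Act) : ↥(C ∪ D) → Act :=
  fun a =>
    if h : a.1 ∈ C then σC ⟨a.1, h⟩
    else σD ⟨a.1, ((Set.mem_union _ _ _).mp a.2).resolve_left h⟩

end

/-- A general concurrent game frame: a nonempty set of states, a nonempty set
of actions, and an outcome function for the grand coalition.  Joint actions of
a coalition C are functions C → Act; action profiles are functions Agent → Act. -/
structure Frame (Agent : Type) where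
  State : Type
  state_nonempty : Nonempty State
  Act : Type
  act_nonempty : Nonempty Act
  out : State → (Agent → Act) → Set State

namespace Frame

variable {Agent : Type} (F : Frame Agent)

/-- Outcome function for a coalition C. -/
def outC (C : Set Agent) (s : F.State) (σ : C → F.Act) : Set F.State :=
  ⋃ (τ : Agent → F.Act) (_ : ∀ a : C, τ a.1 = σ a), F.out s τ

/-- Availability function: the available joint actions of C at s. -/
def aja (C : Set Agent) (s : F.State) : Set (C → F.Act) :=
  {σ | (F.outC C s σ).Nonempty}

def Serial : Prop := ∀ (s : F.State) (C : Set Agent), (F.aja C s).Nonempty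

def Independent : Prop :=
  ∀ (s : F.State) (C D : Set Agent), C ∩ D = ∅ →
    ∀ σC ∈ F.aja C s, ∀ σD ∈ F.aja D s, jaUnion σC σD ∈ F.aja (C ∪ D) s

def Deterministic : Prop :=
  ∀ s : F.State, ∀ σ ∈ F.aja Set.univ s, ∃ t : F.State, F.outC Set.univ s σ = {t}

end Frame

/-- A general concurrent game model: a frame together with a labeling function
(atomic propositions are drawn from the countable set ℕ). -/
structure Model (Agent : Type) extends Frame Agent where
  lab : State → Set ℕ

namespace Model

variable {Agent : Type} (M : Model Agent)

/-- Satisfaction: M, s ⊨ φ. -/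
def sat : Formula Agent → M.State → Prop
  | .top, _ => True
  | .atom n, s => n ∈ M.lab s
  | .neg φ, s => ¬ sat φ s
  | .and φ ψ, s => sat φ s ∧ sat ψ s
  | .coal C φ, s => ∃ σ ∈ M.toFrame.aja C s, ∀ t ∈ M.toFrame.outC C s σ, sat φ t

/-- M is an X-model (for X ∈ ES). -/
def IsX (X : Set P3) : Prop :=
  (P3.S ∈ X → M.toFrame.Serial) ∧ (P3.I ∈ X → M.toFrame.Independent) ∧
    (P3.D ∈ X → M.toFrame.Deterministic)

end Model

/-- φ is X-valid: φ holds at every pointed X-model. -/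
def XValid {Agent : Type} (X : Set P3) (φ : Formula Agent) : Prop :=
  ∀ M : Model Agent, M.IsX X → ∀ s : M.State, M.sat φ s

/-- φ is X-satisfiable: φ holds at some pointed X-model. -/
def XSat {Agent : Type} (X : Set P3) (φ : Formula Agent) : Prop :=
  ∃ M : Model Agent, M.IsX X ∧ ∃ s : M.State, M.sat φ s

/-- φ ⊨_XL ψ : ψ holds at every pointed X-model at which φ holds. -/
def XConseq {Agent : Type} (X : Set P3) (φ ψ : Formula Agent) : Prop :=
  ∀ M : Model Agent, M.IsX X → ∀ s : M.State, M.sat φ s → M.sat ψ s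
def bigConj {Agent : Type} (l : List (Formula Agent)) : Formula Agent :=
  l.foldr Formula.and Formula.top

def bigDisj {Agent : Type} (l : List (Formula Agent)) : Formula Agent :=
  l.foldr Formula.or Formula.bot

inductive IsLiteral {Agent : Type} : Formula Agent → Prop
  | pos (n : ℕ) : IsLiteral (Formula.atom n)
  | neg (n : ℕ) : IsLiteral (Formula.neg (Formula.atom n))

/-- An elementary disjunction: a disjunction of propositional literals. -/
inductive IsElemDisj {Agent : Type} : Formula Agent → Prop
  | lit {φ : Formula Agent} : IsLiteral φ → IsElemDisj φ
  | or {φ ψ : Formula Agent} : IsElemDisj φ → IsElemDisj ψ → IsElemDisj (φ.or ψ)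

/-- An elementary conjunction: a conjunction of propositional literals. -/
inductive IsElemConj {Agent : Type} : Formula Agent → Prop
  | lit {φ : Formula Agent} : IsLiteral φ → IsElemConj φ
  | and {φ ψ : Formula Agent} : IsElemConj φ → IsElemConj ψ → IsElemConj (φ.and ψ)

/-- The data of a standard disjunction γ ∨ (⋀_{i∈NI}⟨A_i⟩φ_i → ⋁_{j∈PI}⟨B_j⟩ψ_j):
NI is represented by `Fin n` (possibly empty) and PI by `Fin (m+1)` (nonempty);
(1) if NI ≠ ∅ then ⟨A_i⟩φ_i = ⟨∅⟩⊤ for some i ∈ NI, and (2) ⟨B_0⟩ψ_0 = ⟨AG⟩⊥. -/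
structure StdDisj (Agent : Type) where
  γ : Formula Agent
  hγ : IsElemDisj γ
  n : ℕ
  m : ℕ
  A : Fin n → Set Agent
  φ : Fin n → Formula Agent
  B : Fin (m + 1) → Set Agent
  ψ : Fin (m + 1) → Formula Agent
  hNI : n ≠ 0 → ∃ i : Fin n, A i = ∅ ∧ φ i = Formula.top
  hB0 : B 0 = Set.univ
  hψ0 : ψ 0 = Formula.bot

namespace StdDisj

variable {Agent : Type} (d : StdDisj Agent)

/-- The formula γ ∨ (⋀_{i∈NI}⟨A_i⟩φ_i → ⋁_{j∈PI}⟨B_j⟩ψ_j). -/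
def toFormula : Formula Agent :=
  d.γ.or
    ((bigConj ((List.finRange d.n).map fun i => Formula.coal (d.A i) (d.φ i))).imp
      (bigDisj ((List.finRange (d.m + 1)).map fun j => Formula.coal (d.B j) (d.ψ j))))

/-- N ⊆ NI is X-neat. -/
def Neat (X : Set P3) (N : Finset (Fin d.n)) : Prop :=
  (∀ i ∈ N, ∀ i' ∈ N, i ≠ i' → d.A i ∩ d.A i' = ∅) ∧
    (P3.S ∉ X → N.Nonempty) ∧
    (P3.I ∉ X → ∀ i ∈ N, ∀ i' ∈ N, d.A i ≠ ∅ → d.A i' ≠ ∅ → i = i')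

/-- The set of basic positive indices `PI₀ = { j ∈ PI : B_j = AG }`. -/
noncomputable def PI0 : Finset (Fin (d.m + 1)) :=
  letI := Classical.decPred fun j : Fin (d.m + 1) => d.B j = Set.univ
  Finset.univ.filter fun j => d.B j = Set.univ

end StdDisj

/-- The data of a standard conjunction γ ∧ ⋀_{i∈NI}⟨A_i⟩φ_i ∧ ⋀_{j∈PI}¬⟨B_j⟩ψ_j:
(1) if NI ≠ ∅ then ⟨A_i⟩φ_i = ⟨∅⟩⊤ for some i ∈ NI, and (2) ¬⟨B_0⟩ψ_0 = ¬⟨AG⟩⊥. -/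
structure StdConj (Agent : Type) where
  γ : Formula Agent
  hγ : IsElemConj γ
  n : ℕ
  m : ℕ
  A : Fin n → Set Agent
  φ : Fin n → Formula Agent
  B : Fin (m + 1) → Set Agent
  ψ : Fin (m + 1) → Formula Agent
  hNI : n ≠ 0 → ∃ i : Fin n, A i = ∅ ∧ φ i = Formula.top
  hB0 : B 0 = Set.univ
  hψ0 : ψ 0 = Formula.bot

/-- The formula γ ∧ ⋀_{i∈NI}⟨A_i⟩φ_i ∧ ⋀_{j∈PI}¬⟨B_j⟩ψ_j. -/
def StdConj.toFormula {Agent : Type} (k : StdConj Agent) : Formula Agent :=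
  (k.γ.and
      (bigConj ((List.finRange k.n).map fun i => Formula.coal (k.A i) (k.φ i)))).and
    (bigConj ((List.finRange (k.m + 1)).map fun j =>
      Formula.neg (Formula.coal (k.B j) (k.ψ j))))

namespace Model

variable {Agent : Type} (M : Model Agent)

theorem sat_or (φ ψ : Formula Agent) (s : M.State) :
    M.sat (φ.or ψ) s ↔ M.sat φ s ∨ M.sat ψ s :=
  or_iff_not_and_not.symm

theorem sat_imp (φ ψ : Formula Agent) (s : M.State) :
    M.sat (φ.imp ψ) s ↔ (M.sat φ s → M.sat ψ s) :=
  (M.sat_or φ.neg ψ s).trans imp_iff_not_or.symm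

theorem sat_iff (φ ψ : Formula Agent) (s : M.State) :
    M.sat (φ.iff ψ) s ↔ (M.sat φ s ↔ M.sat ψ s) :=
  (and_congr (M.sat_imp φ ψ s) (M.sat_imp ψ φ s)).trans iff_iff_implies_and_implies.symm

end Model

/-- Two formulas are complementary if, at every pointed general concurrent game model, each
holds exactly when the other fails. -/
def Formula.Complementary {Agent : Type} (φ ψ : Formula Agent) : Prop :=
  ∀ (M : Model Agent) (s : M.State), ¬ M.sat φ s ↔ M.sat ψ s

namespace Formula

variable {Agent : Type} {φ φ' ψ ψ' : Formula Agent}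

theorem complementary_iff_forall_sat :
    φ.Complementary ψ ↔ ∀ (M : Model Agent) (s : M.State), M.sat (φ.neg.iff ψ) s :=
  forall₂_congr fun M s => (M.sat_iff φ.neg ψ s).symm

theorem complementary_neg (φ : Formula Agent) : φ.Complementary φ.neg :=
  fun _ _ => Iff.rfl

namespace Complementary

theorem symm (h : φ.Complementary ψ) : ψ.Complementary φ :=
  fun M s => not_iff_comm.1 (h M s)

theorem or_and (hφ : φ.Complementary φ') (hψ : ψ.Complementary ψ') :
    (φ.or ψ).Complementary (φ'.and ψ') := fun M s =>
  calc ¬ M.sat (φ.or ψ) s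
    _ ↔ ¬ (M.sat φ s ∨ M.sat ψ s) := not_congr (M.sat_or φ ψ s)
    _ ↔ ¬ M.sat φ s ∧ ¬ M.sat ψ s := not_or
    _ ↔ M.sat φ' s ∧ M.sat ψ' s := and_congr (hφ M s) (hψ M s)

theorem imp_and (φ : Formula Agent) (hψ : ψ.Complementary ψ') :
    (φ.imp ψ).Complementary (φ.and ψ') :=
  (complementary_neg φ).symm.or_and hψ

theorem bigDisj_bigConj {l l' : List (Formula Agent)} (h : List.Forall₂ Complementary l l') :
    (bigDisj l).Complementary (bigConj l') := by
  induction h with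
  | nil => exact (complementary_neg top).symm
  | cons hφ _ ih => exact hφ.or_and ih

end Complementary

theorem complementary_bigDisj_map {ι : Type*} (l : List ι) (f : ι → Formula Agent) :
    (bigDisj (l.map f)).Complementary (bigConj (l.map fun i => (f i).neg)) :=
  .bigDisj_bigConj <| List.forall₂_map_left_iff.2 <| List.forall₂_map_right_iff.2 <|
    List.forall₂_same.2 fun i _ => complementary_neg (f i)

end Formula

theorem IsLiteral.exists_complementary {Agent : Type} {φ : Formula Agent} (h : IsLiteral φ) :
    ∃ ψ, IsLiteral ψ ∧ φ.Complementary ψ := by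
  cases h with
  | pos n => exact ⟨_, .neg n, Formula.complementary_neg _⟩
  | neg n => exact ⟨_, .pos n, (Formula.complementary_neg _).symm⟩

theorem IsElemDisj.exists_complementary {Agent : Type} {γ : Formula Agent} (h : IsElemDisj γ) :
    ∃ γ', IsElemConj γ' ∧ γ.Complementary γ' := by
  induction h with
  | lit hφ =>
    obtain ⟨φ', hφ', hc⟩ := hφ.exists_complementary
    exact ⟨φ', .lit hφ', hc⟩
  | or _ _ ihφ ihψ =>
    obtain ⟨φ', hφ', hcφ⟩ := ihφ
    obtain ⟨ψ', hψ', hcψ⟩ := ihψ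
    exact ⟨φ'.and ψ', .and hφ' hψ', hcφ.or_and hcψ⟩

theorem IsElemConj.exists_complementary {Agent : Type} {γ : Formula Agent} (h : IsElemConj γ) :
    ∃ γ', IsElemDisj γ' ∧ γ.Complementary γ' := by
  induction h with
  | lit hφ =>
    obtain ⟨φ', hφ', hc⟩ := hφ.exists_complementary
    exact ⟨φ', .lit hφ', hc⟩
  | and _ _ ihφ ihψ =>
    obtain ⟨φ', hφ', hcφ⟩ := ihφ
    obtain ⟨ψ', hψ', hcψ⟩ := ihψ
    exact ⟨φ'.or ψ', .or hφ' hψ', (hcφ.symm.or_and hcψ.symm).symm⟩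

/-- The standard conjunction with the coalition data of `d` and elementary part `γ'`. It is a
negation of `d` when `γ'` is complementary to the elementary part of `d`. -/
def StdDisj.toStdConj {Agent : Type} (d : StdDisj Agent) {γ' : Formula Agent}
    (hγ' : IsElemConj γ') : StdConj Agent :=
  { d with γ := γ', hγ := hγ' }

/-- The standard disjunction with the coalition data of `k` and elementary part `γ'`. It is a
negation of `k` when `γ'` is complementary to the elementary part of `k`. -/
def StdConj.toStdDisj {Agent : Type} (k : StdConj Agent) {γ' : Formula Agent}
    (hγ' : IsElemDisj γ') : StdDisj Agent :=
  { k with γ := γ', hγ := hγ' }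

theorem StdDisj.complementary_toStdConj {Agent : Type} (d : StdDisj Agent) {γ' : Formula Agent}
    (hγ' : IsElemConj γ') (hc : d.γ.Complementary γ') :
    d.toFormula.Complementary (d.toStdConj hγ').toFormula := fun M s =>
  have hcoal := Formula.complementary_bigDisj_map (List.finRange (d.m + 1))
    fun j => .coal (d.B j) (d.ψ j)
  (hc.or_and (hcoal.imp_and _) M s).trans and_assoc.symm

theorem StdConj.complementary_toStdDisj {Agent : Type} (k : StdConj Agent) {γ' : Formula Agent}
    (hγ' : IsElemDisj γ') (hc : k.γ.Complementary γ') :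
    k.toFormula.Complementary (k.toStdDisj hγ').toFormula :=
  -- `k` is definitionally `(k.toStdDisj hγ').toStdConj k.hγ`
  ((k.toStdDisj hγ').complementary_toStdConj k.hγ hc.symm).symm

theorem neg_std_equiv_general {Agent : Type} :
    (∀ d : StdDisj Agent, ∃ k : StdConj Agent,
      ∀ (M : Model Agent) (s : M.State),
        M.sat ((Formula.neg d.toFormula).iff k.toFormula) s) ∧
    (∀ k : StdConj Agent, ∃ d : StdDisj Agent,
      ∀ (M : Model Agent) (s : M.State),
        M.sat ((Formula.neg k.toFormula).iff d.toFormula) s) := by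
  simp only [← Formula.complementary_iff_forall_sat]
  constructor
  · intro d
    obtain ⟨γ', hγ', hc⟩ := d.hγ.exists_complementary
    exact ⟨d.toStdConj hγ', d.complementary_toStdConj hγ' hc⟩
  · intro k
    obtain ⟨γ', hγ', hc⟩ := k.hγ.exists_complementary
    exact ⟨k.toStdDisj hγ', k.complementary_toStdDisj hγ' hc⟩

/-- The negation of a standard disjunction is equivalent (at every pointed
general concurrent game model) to a standard conjunction, and vice versa. -/
theorem neg_std_equiv {Agent : Type} [Fintype Agent] :
    (∀ d : StdDisj Agent, ∃ k : StdConj Agent,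
      ∀ (M : Model Agent) (s : M.State),
        M.sat ((Formula.neg d.toFormula).iff k.toFormula) s) ∧
    (∀ k : StdConj Agent, ∃ d : StdDisj Agent,
      ∀ (M : Model Agent) (s : M.State),
        M.sat ((Formula.neg k.toFormula).iff d.toFormula) s) :=
  neg_std_equiv_general

end CL
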